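/- Let N ≥ 1. Suppose f : ℝ → ℝ is continuous and satisfies the growth condition |f(u)| ≤ a(|u| + |u|^{q−1}) for some a > 0 and q > 2, together with: (i) f(u) = o(u) as u → 0; (ii) u ↦ f(u)/|u| is strictly increasing on (−∞,0) and on (0,∞); (iii) F(u)/u² → ∞ as |u| → ∞, where F(u) = ∫₀ᵘ f(s) ds. Suppose V : ℤ^N → ℝ is a bounded potential well: 0 < V₀ ≤ inf_{ℤ^N} V ≤ sup_{ℤ^N} V = V_∞ < ∞ and V(x) → V_∞ as |x| → ∞. Then the equation −Δu + V(x)u = f(u) has a ground state solution in H¹(ℤ^N): there exists a nonzero u ∈ H¹(ℤ^N) with Φ'(u) = 0 and Φ(u) = inf{Φ(v) : v ∈ H¹(ℤ^N)\{0}, Φ'(v)v = 0}. -/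

import Mathlib

open scoped ENNReal

noncomputable section

/-- `H¹(V)`: as a set, the ℓ²-summable real functions on the vertex set;
the `H¹` norm is equivalent to the ℓ² norm by the uniform degree bound. -/
abbrev H1 (Vtx : Type*) := lp (fun _ : Vtx => ℝ) 2

variable {Vtx : Type*}

/-- `Γ(u,v)(x) = (1/2) Σ_{y∼x} (u(y)-u(x))(v(y)-v(x))`. -/
def gammaProd (adj : Vtx → Vtx → Prop) (u v : Vtx → ℝ) (x : Vtx) : ℝ :=
  (1/2) * ∑' y : {y : Vtx // adj x y}, (u y.1 - u x) * (v y.1 - v x)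

/-- `|∇u|²(x) = (1/2) Σ_{y∼x} (u(y)-u(x))²`. -/
def gradSq (adj : Vtx → Vtx → Prop) (u : Vtx → ℝ) (x : Vtx) : ℝ :=
  gammaProd adj u u x

/-- `Δu(x) = Σ_{y∼x} (u(y)-u(x))`. -/
def graphLap (adj : Vtx → Vtx → Prop) (u : Vtx → ℝ) (x : Vtx) : ℝ :=
  ∑' y : {y : Vtx // adj x y}, (u y.1 - u x)

/-- the norm `‖u‖` induced by the potential `V`:
`‖u‖² = Σ_x (|∇u|²(x) + V(x)u(x)²)`. -/
def nrmV (adj : Vtx → Vtx → Prop) (Vp : Vtx → ℝ) (u : Vtx → ℝ) : ℝ :=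
  Real.sqrt (∑' x, (gradSq adj u x + Vp x * (u x)^2))

/-- the `V`-norm of an element of `H¹`. -/
def nrmH (adj : Vtx → Vtx → Prop) (Vp : Vtx → ℝ) (u : H1 Vtx) : ℝ :=
  nrmV adj Vp (fun y => u y)

/-- `⟨u,v⟩ = Σ_x (Γ(u,v)(x) + V(x)u(x)v(x))`. -/
def iprodH (adj : Vtx → Vtx → Prop) (Vp : Vtx → ℝ) (u v : H1 Vtx) : ℝ :=
  ∑' x, (gammaProd adj (fun y => u y) (fun y => v y) x + Vp x * u x * v x)

/-- the variational functional `Φ(u) = ½‖u‖² − Σ_x F(x,u(x))`. -/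
def PhiF (adj : Vtx → Vtx → Prop) (Vp : Vtx → ℝ) (F : Vtx → ℝ → ℝ) (u : H1 Vtx) : ℝ :=
  (1/2) * ∑' x, (gradSq adj (fun y => u y) x + Vp x * (u x)^2) - ∑' x, F x (u x)

/-- the Nehari manifold `N = {u ∈ H¹\{0} : Φ'(u)u = 0}`. -/
def Nehari (adj : Vtx → Vtx → Prop) (Vp : Vtx → ℝ) (F : Vtx → ℝ → ℝ) : Set (H1 Vtx) :=
  {u | u ≠ 0 ∧ fderiv ℝ (PhiF adj Vp F) u u = 0}

/-- adjacency of the lattice graph `ℤ^N`. -/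
def adjZ (N : ℕ) (x y : Fin N → ℤ) : Prop := (∑ i, (x i - y i).natAbs) = 1

end


/-! ### Scalar facts on the nonlinearity -/

structure NL (f F : ℝ → ℝ) : Prop where
  cont : Continuous f
  f0 : f 0 = 0
  small : ∀ ε > 0, ∃ δ > 0, ∀ t : ℝ, |t| < δ → |f t| ≤ ε * |t|
  ray : ∀ t s : ℝ, t ≠ 0 → 0 < s → s < 1 → f (s * t) * t < s * (f t * t)
  F0 : F 0 = 0
  dF : ∀ t, HasDerivAt F (f t) t
  super : ∀ M : ℝ, ∃ R > 0, ∀ t : ℝ, R ≤ |t| → M * t ^ 2 ≤ F t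

theorem NL.mk' (f : ℝ → ℝ) (hcont : Continuous f)
    (a q : ℝ) (hq : 2 < q)
    (hgrowth : ∀ t, |f t| ≤ a * (|t| + |t| ^ (q - 1)))
    (hsmall : ∀ ε > 0, ∃ δ > 0, ∀ t : ℝ, t ≠ 0 → |t| < δ → |f t| ≤ ε * |t|)
    (hmono : StrictMonoOn (fun t => f t / |t|) (Set.Iio 0) ∧
             StrictMonoOn (fun t => f t / |t|) (Set.Ioi 0))
    (F : ℝ → ℝ) (hF : ∀ t, F t = ∫ s in (0:ℝ)..t, f s)
    (hsuper : ∀ M : ℝ, ∃ R > 0, ∀ t : ℝ, R ≤ |t| → M ≤ F t / t ^ 2) : NL f F := by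
  have f0 : f 0 = 0 := by
    have h := hgrowth 0
    have h2 : (0:ℝ) ^ (q - 1) = 0 := Real.zero_rpow (by linarith)
    simp only [abs_zero, h2, add_zero, mul_zero] at h
    exact abs_eq_zero.1 (le_antisymm h (abs_nonneg _))
  refine ⟨hcont, f0, ?_, ?_, ?_, ?_, ?_⟩
  · intro ε hε
    obtain ⟨δ, hδ, h⟩ := hsmall ε hε
    refine ⟨δ, hδ, fun t ht => ?_⟩
    by_cases h0 : t = 0
    · simp [h0, f0]
    · exact h t h0 ht
  · intro t s ht hs hs1
    rcases lt_or_gt_of_ne ht with h | h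
    · have h1 : t < s * t := by nlinarith
      have h2 : s * t < 0 := mul_neg_of_pos_of_neg hs h
      have := hmono.1 (show t ∈ Set.Iio 0 from h) (show s * t ∈ Set.Iio 0 from h2) h1
      simp only [abs_of_neg h, abs_of_neg h2] at this
      rw [div_lt_div_iff₀ (by linarith) (by linarith)] at this
      have h3 : s * f t < f (s * t) := by
        by_contra hc
        push Not at hc
        nlinarith
      nlinarith
    · have h1 : s * t < t := by nlinarith
      have h2 : 0 < s * t := mul_pos hs h
      have := hmono.2 (show s * t ∈ Set.Ioi 0 from h2) (show t ∈ Set.Ioi 0 from h) h1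
      simp only [abs_of_pos h, abs_of_pos h2] at this
      rw [div_lt_div_iff₀ (by linarith) (by linarith)] at this
      nlinarith
  · simp [hF]
  · intro t
    have : F = fun t => ∫ s in (0:ℝ)..t, f s := funext hF
    rw [this]
    exact (hcont.integral_hasStrictDerivAt 0 t).hasDerivAt
  · intro M
    obtain ⟨R, hR, h⟩ := hsuper M
    refine ⟨R, hR, fun t ht => ?_⟩
    have h0 : 0 < |t| := by linarith
    have h0' : t ≠ 0 := abs_pos.1 h0
    have : 0 < t ^ 2 := by positivity
    exact (le_div_iff₀ this).1 (h t ht)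

namespace NL
variable {f F : ℝ → ℝ}

theorem mul_nonneg' (h : NL f F) (t : ℝ) : 0 ≤ f t * t := by
  by_cases ht : t = 0
  · simp [ht]
  have ht2 : 0 < t ^ 2 := by positivity
  by_contra hc
  push Not at hc
  obtain ⟨δ, hδ, hs⟩ := h.small (-(f t * t) / (2 * t ^ 2)) (by
    apply div_pos <;> linarith)
  obtain ⟨s, hs0, hs1⟩ : ∃ s, 0 < s ∧ s < min 1 (δ / |t|) := exists_between (by
    have : 0 < |t| := abs_pos.2 ht
    positivity)
  have hs2 : |s * t| < δ := by
    rw [abs_mul, abs_of_pos hs0]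
    exact (lt_div_iff₀ (abs_pos.2 ht)).1 (hs1.trans_le (min_le_right _ _))
  have h1 := hs _ hs2
  have h2 := h.ray t s ht hs0 (hs1.trans_le (min_le_left _ _))
  have h3 : |f (s * t) * t| ≤ s * (-(f t * t) / 2) := by
    rw [abs_mul]
    calc |f (s * t)| * |t| ≤ (-(f t * t) / (2 * t ^ 2) * |s * t|) * |t| := by gcongr
      _ = s * (-(f t * t) / 2) := by
        rw [abs_mul, abs_of_pos hs0]
        have : |t| * |t| = t ^ 2 := by rw [← sq, sq_abs]
        field_simp
        linear_combination (-(f t)) * this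
  have h4 := neg_abs_le (f (s * t) * t)
  nlinarith

theorem mul_pos' (h : NL f F) {t : ℝ} (ht : t ≠ 0) : 0 < f t * t := by
  have h1 := h.ray t (1/2) ht (by norm_num) (by norm_num)
  have h2 := h.mul_nonneg' (1/2 * t)
  nlinarith

/-- along rays, beyond `1` -/
theorem ray' (h : NL f F) (t s : ℝ) (ht : t ≠ 0) (hs : 1 < s) :
    s * (f t * t) < f (s * t) * t := by
  have hs0 : 0 < s := by linarith
  have h1 := h.ray (s * t) s⁻¹ (by positivity) (by positivity) (inv_lt_one_of_one_lt₀ hs)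
  rw [inv_mul_cancel_left₀ hs0.ne'] at h1
  have : s⁻¹ * (f (s * t) * (s * t)) = f (s * t) * t := by field_simp
  rw [this] at h1
  linarith

theorem key (h : NL f F) (t s : ℝ) (hs : 0 ≤ s) :
    F t - F (s * t) ≤ (1 - s ^ 2) / 2 * (f t * t) := by
  by_cases ht : t = 0
  · simp [ht]
  set g : ℝ → ℝ := fun s => F (s * t) - s ^ 2 / 2 * (f t * t) with hg
  have hd : ∀ s, HasDerivAt g (f (s * t) * t - s * (f t * t)) s := by
    intro s
    have h1 : HasDerivAt (fun s : ℝ => s * t) t s := by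
      simpa using (hasDerivAt_id s).mul_const t
    have h2 := (h.dF (s * t)).comp s h1
    have h3 : HasDerivAt (fun s : ℝ => s ^ 2 / 2 * (f t * t)) (s * (f t * t)) s := by
      have := ((hasDerivAt_pow 2 s).div_const 2).mul_const (f t * t)
      refine this.congr_deriv ?_
      push_cast
      ring
    exact h2.sub h3
  have hc : Continuous g := continuous_iff_continuousAt.2 fun s => (hd s).continuousAt
  have : g 1 ≤ g s := by
    rcases le_total s 1 with h1 | h1
    · have := antitoneOn_of_deriv_nonpos (convex_Icc 0 1) hc.continuousOn
        (fun x _ => (hd x).differentiableAt.differentiableWithinAt) (by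
          intro x hx
          rw [interior_Icc] at hx
          rw [(hd x).deriv]
          linarith [h.ray t x ht hx.1 hx.2])
      exact this ⟨hs, h1⟩ ⟨zero_le_one, le_rfl⟩ h1
    · have := monotoneOn_of_deriv_nonneg (convex_Ici 1) hc.continuousOn
        (fun x _ => (hd x).differentiableAt.differentiableWithinAt) (by
          intro x hx
          rw [interior_Ici] at hx
          rw [(hd x).deriv]
          linarith [h.ray' t x ht hx])
      exact this (Set.mem_Ici.2 le_rfl) h1 h1
  simp only [hg, one_mul] at this
  linarith

theorem G_nonneg (h : NL f F) (t : ℝ) : 0 ≤ 1/2 * (f t * t) - F t := by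
  have := h.key t 0 le_rfl
  simp only [zero_mul, h.F0] at this
  linarith

theorem G_mono (h : NL f F) (t s : ℝ) (hs : 0 ≤ s) (hs1 : s ≤ 1) :
    1/2 * (f (s * t) * (s * t)) - F (s * t) ≤ 1/2 * (f t * t) - F t := by
  by_cases ht : t = 0
  · simp [ht]
  rcases hs.eq_or_lt with h0 | h0
  · subst h0
    simpa [h.F0] using h.G_nonneg t
  rcases hs1.eq_or_lt with h1 | h1
  · simp [h1]
  have h2 := h.key t s hs
  have h3 := h.ray t s ht h0 h1
  nlinarith

theorem G_pos (h : NL f F) {t : ℝ} (ht : t ≠ 0) : 0 < 1/2 * (f t * t) - F t := by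
  have h1 := h.ray t (1/2) ht (by norm_num) (by norm_num)
  have h2 := h.key t (1/2) (by norm_num)
  have h3 := h.G_nonneg (1/2 * t)
  nlinarith

theorem F_nonneg (h : NL f F) (t : ℝ) : 0 ≤ F t := by
  have hm : ∀ s : ℝ, 0 ≤ s → 0 ≤ f (s * t) * t := by
    intro s hs
    rcases hs.eq_or_lt with h0 | h0
    · simp [← h0, h.f0]
    · have := h.mul_nonneg' (s * t)
      have h2 : f (s * t) * (s * t) = s * (f (s * t) * t) := by ring
      rw [h2] at this
      exact nonneg_of_mul_nonneg_right this h0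
  have hd : ∀ s, HasDerivAt (fun s => F (s * t)) (f (s * t) * t) s := by
    intro s
    have h1 : HasDerivAt (fun s : ℝ => s * t) t s := by
      simpa using (hasDerivAt_id s).mul_const t
    exact (h.dF (s * t)).comp s h1
  have := monotoneOn_of_deriv_nonneg (convex_Ici (0:ℝ))
    (f := fun s => F (s * t))
    (fun x _ => (hd x).continuousAt.continuousWithinAt)
    (fun x _ => (hd x).differentiableAt.differentiableWithinAt) (by
      intro x hx
      rw [interior_Ici] at hx
      rw [(hd x).deriv]
      exact hm x (le_of_lt hx))
  have := this (Set.mem_Ici.2 le_rfl) (Set.mem_Ici.2 zero_le_one) zero_le_one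
  simpa [h.F0] using this

/-- linear bound on bounded sets -/
theorem lin (h : NL f F) (R : ℝ) : ∃ C, 0 ≤ C ∧ ∀ t, |t| ≤ R → |f t| ≤ C * |t| := by
  obtain ⟨δ, hδ, hs⟩ := h.small 1 one_pos
  obtain ⟨M, hM⟩ := (isCompact_Icc (a := -R) (b := R)).exists_bound_of_continuousOn
    h.cont.continuousOn
  refine ⟨max 1 (|M| / δ), by positivity, fun t ht => ?_⟩
  rcases lt_or_ge |t| δ with h1 | h1
  · exact (hs t h1).trans (by gcongr; exact le_max_left _ _)
  · calc |f t| ≤ |M| := (hM t (abs_le.1 ht)).trans (le_abs_self _)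
      _ = |M| / δ * δ := by field_simp
      _ ≤ max 1 (|M| / δ) * |t| := by gcongr; exact le_max_right _ _

/-- quasi-Lipschitz bound -/
theorem quasi (h : NL f F) (R ε : ℝ) (hε : 0 < ε) : ∃ C, 0 ≤ C ∧ ∀ s k, |s| ≤ R → |k| ≤ 1 →
    |f (s + k) - f s| ≤ ε * |s| + C * |k| := by
  obtain ⟨δ, hδ, hs⟩ := h.small (ε / 2) (by positivity)
  have hK := isCompact_Icc (a := -(R+1)) (b := R+1)
  obtain ⟨M, hM⟩ := hK.exists_bound_of_continuousOn h.cont.continuousOn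
  have huc := hK.uniformContinuousOn_of_continuous h.cont.continuousOn
  obtain ⟨η, hη, hu⟩ := Metric.uniformContinuousOn_iff.1 huc (ε * (δ / 2)) (by positivity)
  set m := min η (δ / 2) with hm
  have hm0 : 0 < m := by positivity
  refine ⟨max (ε / 2) (2 * |M| / m), by positivity, fun s k hsR hk => ?_⟩
  have hsI : s ∈ Set.Icc (-(R+1)) (R+1) := abs_le.1 (by linarith)
  have hskI : s + k ∈ Set.Icc (-(R+1)) (R+1) := abs_le.1 ((abs_add_le s k).trans (by linarith))
  rcases le_or_gt m |k| with h1 | h1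
  · have : |f (s + k) - f s| ≤ 2 * |M| := by
      have h2 := (hM _ hsI).trans (le_abs_self M)
      have h3 := (hM _ hskI).trans (le_abs_self M)
      rw [Real.norm_eq_abs] at h2 h3
      have := abs_sub (f (s + k)) (f s)
      linarith
    calc |f (s + k) - f s| ≤ 2 * |M| := this
      _ = 2 * |M| / m * m := by field_simp
      _ ≤ max (ε / 2) (2 * |M| / m) * |k| := by gcongr; exact le_max_right _ _
      _ ≤ _ := by have : 0 ≤ ε * |s| := by positivity
                  linarith
  · have hk2 : 0 ≤ max (ε / 2) (2 * |M| / m) * |k| := by positivity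
    rcases le_or_gt (δ / 2) |s| with h2 | h2
    · have h3 := hu _ hskI _ hsI (by
        rw [Real.dist_eq]; simpa using h1.trans_le (min_le_left _ _))
      rw [Real.dist_eq] at h3
      have : ε * (δ / 2) ≤ ε * |s| := by gcongr
      linarith
    · have h4 : |k| < δ / 2 := h1.trans_le (min_le_right _ _)
      have h3 := hs (s + k) ((abs_add_le s k).trans_lt (by linarith))
      have h5 := hs s (by linarith)
      have h6 := abs_sub (f (s + k)) (f s)
      have h7 : ε / 2 * |s + k| ≤ ε / 2 * (|s| + |k|) := by gcongr; exact abs_add_le s k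
      have h8 : ε / 2 * |k| ≤ max (ε / 2) (2 * |M| / m) * |k| := by
        gcongr; exact le_max_left _ _
      linarith

theorem quasiF (h : NL f F) (R ε : ℝ) (hε : 0 < ε) : ∃ C, 0 ≤ C ∧ ∀ s k, |s| ≤ R → |k| ≤ 1 →
    |F (s + k) - F s - f s * k| ≤ ε * (|s| * |k|) + C * k ^ 2 := by
  obtain ⟨C, hC, hq⟩ := h.quasi R ε hε
  refine ⟨C, hC, fun s k hs hk => ?_⟩
  have hd : ∀ x ∈ Set.Icc (0:ℝ) 1, HasDerivWithinAt (fun x => F (s + x * k) - x * (f s * k))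
      ((f (s + x * k) - f s) * k) (Set.Icc 0 1) x := by
    intro x _
    have h1 : HasDerivAt (fun x : ℝ => s + x * k) k x := by
      simpa using ((hasDerivAt_id x).mul_const k).const_add s
    have h2 := (h.dF (s + x * k)).comp x h1
    have h3 : HasDerivAt (fun x : ℝ => x * (f s * k)) (f s * k) x := by
      simpa using (hasDerivAt_id x).mul_const (f s * k)
    have h4 := h2.sub h3
    rw [sub_mul]
    exact h4.hasDerivWithinAt
  have := norm_image_sub_le_of_norm_deriv_le_segment_01' hd (C := (ε * |s| + C * |k|) * |k|) (by
    intro x hx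
    rw [norm_mul, Real.norm_eq_abs, Real.norm_eq_abs]
    have hxk : |x * k| ≤ |k| := by
      rw [abs_mul, abs_of_nonneg hx.1]
      have := abs_nonneg k
      nlinarith [hx.2]
    have := hq s (x * k) hs (hxk.trans hk)
    gcongr
    refine this.trans ?_
    gcongr)
  simp only [one_mul, zero_mul, add_zero, sub_zero, Real.norm_eq_abs] at this
  have e : F (s + k) - F s - f s * k = F (s + k) - f s * k - F s := by ring
  rw [e]
  refine this.trans (le_of_eq ?_)
  have : |k| * |k| = k ^ 2 := by rw [← sq, sq_abs]
  linear_combination C * this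

end NL

/-! ### Operators on `ℓ²` -/

noncomputable section Ops

variable {X : Type*}

theorem memL2 {g : X → ℝ} (hg : Summable fun x => g x ^ 2) : Memℓp g 2 := by
  rw [memℓp_gen_iff (by norm_num)]
  simpa using hg

theorem sumSq (u : H1 X) : Summable fun x => u x ^ 2 := by
  have := (memℓp_gen_iff (p := 2) (by norm_num)).1 u.2
  simpa using this

theorem inner_hasSum (u v : H1 X) : HasSum (fun x => u x * v x) (inner ℝ u v) := by
  have := lp.hasSum_inner (𝕜 := ℝ) u v
  simpa [mul_comm] using this

theorem norm_hasSum (u : H1 X) : HasSum (fun x => u x ^ 2) (‖u‖ ^ 2) := by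
  have := inner_hasSum u u
  rw [real_inner_self_eq_norm_sq] at this
  simpa [sq] using this

theorem coord_le (u : H1 X) (x : X) : |u x| ≤ ‖u‖ :=
  lp.norm_apply_le_norm (by norm_num) u x

theorem co_add (u v : H1 X) (x : X) : (u + v) x = u x + v x := rfl
theorem co_sub (u v : H1 X) (x : X) : (u - v) x = u x - v x := rfl
theorem co_smul (c : ℝ) (u : H1 X) (x : X) : (c • u) x = c * u x := rfl
theorem co_zero (x : X) : (0 : H1 X) x = 0 := rfl
theorem co_sum {ι : Type*} (s : Finset ι) (u : ι → H1 X) (x : X) :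
    (∑ i ∈ s, u i) x = ∑ i ∈ s, u i x := by
  classical
  induction s using Finset.induction_on with
  | empty => simp [co_zero]
  | insert a s ha ih => rw [Finset.sum_insert ha, Finset.sum_insert ha, co_add, ih]

theorem norm_le_of_coord (u v : H1 X) (C : ℝ) (hC : 0 ≤ C) (h : ∀ x, |v x| ≤ C * |u x|) :
    ‖v‖ ≤ C * ‖u‖ := by
  apply le_of_sq_le_sq _ (by positivity)
  rw [mul_pow]
  refine hasSum_le (fun x => ?_) (norm_hasSum v) ((norm_hasSum u).mul_left (C ^ 2))
  rw [← mul_pow, ← sq_abs, ← sq_abs (C * u x), abs_mul, abs_of_nonneg hC]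
  have := h x
  gcongr

theorem memL2_of_le {g : X → ℝ} (u : H1 X) (C : ℝ) (h : ∀ x, |g x| ≤ C * |u x|) :
    Memℓp g 2 := by
  apply memL2
  refine Summable.of_nonneg_of_le (fun x => sq_nonneg _) (fun x => ?_) ((sumSq u).mul_left (C ^ 2))
  have h1 := h x
  have h0 := abs_nonneg (g x)
  rw [← sq_abs, ← sq_abs (u x), ← mul_pow]
  gcongr

def BV (V : X → ℝ) : Prop := ∃ C, 0 ≤ C ∧ ∀ x, |V x| ≤ C

def mulOp (V : X → ℝ) (hV : BV V) : H1 X →L[ℝ] H1 X :=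
  LinearMap.mkContinuousOfExistsBound
    { toFun := fun u => ⟨fun x => V x * u x, by
        obtain ⟨C, hC, h⟩ := hV
        refine memL2_of_le u C fun x => ?_
        rw [abs_mul]
        have := h x
        gcongr⟩
      map_add' := fun u v => by
        ext x
        exact mul_add (V x) (u x) (v x)
      map_smul' := fun c u => by
        ext x
        exact mul_left_comm (V x) c (u x) }
    (by
      obtain ⟨C, hC, h⟩ := hV
      refine ⟨C, fun u => norm_le_of_coord _ _ C hC fun x => ?_⟩
      change |V x * u x| ≤ _
      rw [abs_mul]
      have := h x
      gcongr)

theorem mulOp_apply (V : X → ℝ) (hV : BV V) (u : H1 X) (x : X) : mulOp V hV u x = V x * u x := rfl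

variable [AddCommGroup X]

def shiftOp (d : X) : H1 X →L[ℝ] H1 X :=
  LinearMap.mkContinuousOfExistsBound
    { toFun := fun u => ⟨fun x => u (x + d),
        memL2 (g := fun x => u (x + d))
          (Summable.comp_injective (sumSq u) (add_left_injective d))⟩
      map_add' := fun u v => by
        ext x
        rfl
      map_smul' := fun c u => by
        ext x
        rfl }
    (by
      refine ⟨1, fun u => ?_⟩
      rw [one_mul]
      apply le_of_sq_le_sq _ (norm_nonneg _)
      refine le_of_eq ?_
      refine (norm_hasSum _).unique ?_
      exact (Equiv.hasSum_iff (f := fun x => u x ^ 2) (Equiv.addRight d)).2 (norm_hasSum u))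

theorem shiftOp_apply (d : X) (u : H1 X) (x : X) : shiftOp d u x = u (x + d) := rfl

theorem shift_inner (d : X) (u v : H1 X) : inner ℝ (shiftOp d u) (shiftOp d v) = inner ℝ u v := by
  refine (inner_hasSum _ _).unique ?_
  exact (Equiv.hasSum_iff (f := fun x => u x * v x) (Equiv.addRight d)).2 (inner_hasSum u v)

theorem shift_neg (d : X) (u : H1 X) : shiftOp d (shiftOp (-d) u) = u := by
  ext x
  simp [shiftOp_apply]

theorem shift_norm (d : X) (u : H1 X) : ‖shiftOp d u‖ = ‖u‖ := by
  have := shift_inner d u u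
  rw [real_inner_self_eq_norm_sq, real_inner_self_eq_norm_sq] at this
  exact (sq_eq_sq₀ (norm_nonneg _) (norm_nonneg _)).1 this

theorem shift_adj (d : X) (u v : H1 X) :
    inner ℝ (shiftOp d u) v = inner ℝ u (shiftOp (-d) v) := by
  rw [← shift_inner d u, shift_neg]

def Lop (D : Finset X) (V : X → ℝ) (hV : BV V) : H1 X →L[ℝ] H1 X :=
  (1/2 : ℝ) • ∑ d ∈ D, ((2:ℝ) • ContinuousLinearMap.id ℝ (H1 X) - shiftOp d - shiftOp (-d))
    + mulOp V hV

variable (D : Finset X)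

theorem Lop_eq (V : X → ℝ) (hV : BV V) (u : H1 X) :
    Lop D V hV u = (1/2 : ℝ) • ∑ d ∈ D, ((2:ℝ) • u - shiftOp d u - shiftOp (-d) u)
      + mulOp V hV u := by
  rw [Lop, add_apply, smul_apply, sum_apply]
  rfl

theorem Lop_apply (V : X → ℝ) (hV : BV V) (u : H1 X) (x : X) :
    Lop D V hV u x = 1/2 * ∑ d ∈ D, (2 * u x - u (x + d) - u (x + -d)) + V x * u x := by
  rw [Lop_eq]
  simp only [co_add, co_smul, co_sum, co_sub, shiftOp_apply, mulOp_apply]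

theorem Lop_symm (V : X → ℝ) (hV : BV V) (u v : H1 X) :
    inner ℝ (Lop D V hV u) v = inner ℝ u (Lop D V hV v) := by
  have hm : inner ℝ (mulOp V hV u) v = inner ℝ u (mulOp V hV v) := by
    refine (inner_hasSum _ _).unique ?_
    convert inner_hasSum u (mulOp V hV v) using 2 with x
    simp only [mulOp_apply]
    ring
  rw [Lop_eq, Lop_eq, inner_add_left, inner_add_right, hm, real_inner_smul_left,
    real_inner_smul_right, sum_inner, inner_sum]
  congr 2
  refine Finset.sum_congr rfl fun d _ => ?_
  rw [inner_sub_left, inner_sub_left, inner_sub_right, inner_sub_right, real_inner_smul_left,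
    real_inner_smul_right, shift_adj, shift_adj, neg_neg]
  ring

theorem Lop_shift (V : X → ℝ) (hV : BV V) (z : X) (hV' : BV (fun x => V (x + z))) (u : H1 X) :
    Lop D (fun x => V (x + z)) hV' (shiftOp z u) = shiftOp z (Lop D V hV u) := by
  ext x
  rw [shiftOp_apply, Lop_apply, Lop_apply]
  simp only [shiftOp_apply]
  simp only [add_right_comm _ _ z]

theorem Lop_mono (V W : X → ℝ) (hV : BV V) (hW : BV W) (h : ∀ x, V x ≤ W x) (u : H1 X) :
    inner ℝ u (Lop D V hV u) ≤ inner ℝ u (Lop D W hW u) := by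
  refine hasSum_le (fun x => ?_) (inner_hasSum _ _) (inner_hasSum _ _)
  rw [Lop_apply, Lop_apply]
  nlinarith [mul_le_mul_of_nonneg_right (h x) (mul_self_nonneg (u x))]

theorem gradSq_eq (adj : X → X → Prop) (hadj : ∀ x y, adj x y ↔ y - x ∈ D) (u : X → ℝ) (x : X) :
    gradSq adj u x = 1/2 * ∑ d ∈ D, (u (x + d) - u x) ^ 2 := by
  unfold gradSq gammaProd
  congr 1
  let e : {d // d ∈ D} ≃ {y // adj x y} :=
    (Equiv.addLeft x).subtypeEquiv (fun d => by simp [hadj])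
  rw [← e.tsum_eq, ← Finset.sum_coe_sort D, tsum_fintype]
  refine Finset.sum_congr rfl fun d _ => ?_
  change (u (x + d) - u x) * (u (x + d) - u x) = _
  ring

theorem energy (adj : X → X → Prop) (hadj : ∀ x y, adj x y ↔ y - x ∈ D) (V : X → ℝ) (hV : BV V)
    (u : H1 X) :
    HasSum (fun x => gradSq adj (fun y => u y) x + V x * u x ^ 2) (inner ℝ u (Lop D V hV u)) := by
  have h1 : ∀ d ∈ D, HasSum (fun x => (u (x + d) - u x) ^ 2)
      (inner ℝ u ((2:ℝ) • u - shiftOp d u - shiftOp (-d) u)) := by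
    intro d _
    have h := norm_hasSum (shiftOp d u - u)
    have e : ‖shiftOp d u - u‖ ^ 2 = inner ℝ u ((2:ℝ) • u - shiftOp d u - shiftOp (-d) u) := by
      rw [norm_sub_sq_real, shift_norm, inner_sub_right, inner_sub_right, real_inner_smul_right,
        real_inner_self_eq_norm_sq, ← shift_adj, real_inner_comm u]
      ring
    rw [← e]
    exact h
  have h2 : HasSum (fun x => V x * u x ^ 2) (inner ℝ u (mulOp V hV u)) := by
    have h := inner_hasSum u (mulOp V hV u)
    have e : (fun x => V x * u x ^ 2) = fun x => u x * mulOp V hV u x := by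
      funext x
      rw [mulOp_apply]
      ring
    rw [e]
    exact h
  have h3 := ((hasSum_sum h1).mul_left (1/2)).add h2
  have e : (fun x => gradSq adj (fun y => u y) x + V x * u x ^ 2) =
      fun x => 1/2 * ∑ d ∈ D, (u (x + d) - u x) ^ 2 + V x * u x ^ 2 := by
    funext x
    rw [gradSq_eq D adj hadj]
  rw [e, Lop_eq, inner_add_right, real_inner_smul_right, inner_sum]
  exact h3

theorem Lop_lower (adj : X → X → Prop) (hadj : ∀ x y, adj x y ↔ y - x ∈ D) (V : X → ℝ) (hV : BV V)
    (V0 : ℝ) (h : ∀ x, V0 ≤ V x) (u : H1 X) :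
    V0 * ‖u‖ ^ 2 ≤ inner ℝ u (Lop D V hV u) := by
  refine hasSum_le (fun x => ?_) ((norm_hasSum u).mul_left V0) (energy D adj hadj V hV u)
  rw [gradSq_eq D adj hadj]
  have h1 : 0 ≤ ∑ d ∈ D, (u (x + d) - u x) ^ 2 := Finset.sum_nonneg fun d _ => sq_nonneg _
  nlinarith [mul_le_mul_of_nonneg_right (h x) (sq_nonneg (u x))]

/-- cut-off to a finite set -/
def cut [DecidableEq X] (A : Finset X) (u : H1 X) : H1 X := ∑ i ∈ A, lp.single 2 i (u i)

theorem cut_apply [DecidableEq X] (A : Finset X) (u : H1 X) (x : X) :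
    cut A u x = if x ∈ A then u x else 0 := by
  rw [cut, co_sum]
  simp [lp.single_apply, Pi.single_apply]

theorem cut_tendsto [DecidableEq X] (u : H1 X) :
    Filter.Tendsto (fun A => cut A u) Filter.atTop (nhds u) :=
  lp.hasSum_single (by norm_num) u

theorem cut_inner [DecidableEq X] (A : Finset X) (u v : H1 X) :
    inner ℝ (cut A u) v = ∑ x ∈ A, u x * v x := by
  refine (inner_hasSum _ _).unique ?_
  have := hasSum_sum_of_ne_finset_zero (L := .unconditional X) (f := fun x => cut A u x * v x) (s := A) (by
    intro x hx
    simp [cut_apply, hx])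
  convert this using 1
  refine Finset.sum_congr rfl fun x hx => ?_
  simp [cut_apply, hx]

theorem cut_inner_tendsto [DecidableEq X] (A : Finset X) (a b : ℕ → H1 X) (a' b' : H1 X)
    (V : ℕ → X → ℝ) (W : X → ℝ) (hV : ∀ n, BV (V n)) (hW : BV W)
    (ha : ∀ x, Filter.Tendsto (fun n => a n x) Filter.atTop (nhds (a' x)))
    (hb : ∀ x, Filter.Tendsto (fun n => b n x) Filter.atTop (nhds (b' x)))
    (hVW : ∀ x, Filter.Tendsto (fun n => V n x) Filter.atTop (nhds (W x))) :
    Filter.Tendsto (fun n => inner ℝ (cut A (a n)) (Lop D (V n) (hV n) (b n))) Filter.atTop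
      (nhds (inner ℝ (cut A a') (Lop D W hW b'))) := by
  simp only [cut_inner, Lop_apply]
  refine tendsto_finsetSum _ fun x _ => (ha x).mul (Filter.Tendsto.add ?_ ((hVW x).mul (hb x)))
  refine Filter.Tendsto.const_mul _ (tendsto_finsetSum _ fun d _ => ?_)
  exact (((hb x).const_mul 2).sub (hb _)).sub (hb _)

end Ops

/-! ### The Nemytskii operator and the functional -/

noncomputable section Func

variable {X : Type*} {f F : ℝ → ℝ}

def Nem (h : NL f F) (u : H1 X) : H1 X :=
  ⟨fun x => f (u x), by
    obtain ⟨C, _, hl⟩ := h.lin ‖u‖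
    exact memL2_of_le u C fun x => hl _ (coord_le u x)⟩

theorem Nem_apply (h : NL f F) (u : H1 X) (x : X) : Nem h u x = f (u x) := rfl

theorem Nem_sum (h : NL f F) (u : H1 X) :
    HasSum (fun x => f (u x) * u x) (inner ℝ (Nem h u) u) := inner_hasSum (Nem h u) u

theorem F_le (h : NL f F) (t : ℝ) : F t ≤ 1/2 * (f t * t) := by linarith [h.G_nonneg t]

theorem F_summable (h : NL f F) (u : H1 X) : Summable fun x => F (u x) :=
  Summable.of_nonneg_of_le (fun _ => h.F_nonneg _) (fun x => F_le h (u x))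
    ((Nem_sum h u).summable.mul_left (1/2))

theorem Nem_cont (h : NL f F) : Continuous (Nem (X := X) h) := by
  rw [continuous_iff_continuousAt]
  intro u
  rw [Metric.continuousAt_iff]
  intro ε hε
  set ε' := ε / (2 * (‖u‖ + 1)) with hε'
  have hu := norm_nonneg u
  have hε'0 : 0 < ε' := by positivity
  obtain ⟨C, hC, hq⟩ := h.quasi ‖u‖ ε' hε'0
  refine ⟨min 1 (ε / (2 * (C + 1))), by positivity, fun v hv => ?_⟩
  rw [dist_eq_norm] at hv ⊢
  set k := v - u with hk
  have hk1 : ‖k‖ < 1 := hv.trans_le (min_le_left _ _)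
  have hk2 : ‖k‖ < ε / (2 * (C + 1)) := hv.trans_le (min_le_right _ _)
  have hkn := norm_nonneg k
  let A : H1 X := ⟨fun x => |u x|, memL2_of_le u 1 (by simp)⟩
  let B : H1 X := ⟨fun x => |k x|, memL2_of_le k 1 (by simp)⟩
  have hA : ‖A‖ ≤ ‖u‖ := by
    have := norm_le_of_coord u A 1 zero_le_one (by intro x; change |(|u x|)| ≤ _; simp)
    simpa using this
  have hB : ‖B‖ ≤ ‖k‖ := by
    have := norm_le_of_coord k B 1 zero_le_one (by intro x; change |(|k x|)| ≤ _; simp)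
    simpa using this
  have h1 : ‖Nem h v - Nem h u‖ ≤ 1 * ‖ε' • A + C • B‖ := by
    refine norm_le_of_coord _ _ 1 zero_le_one fun x => ?_
    rw [co_sub, Nem_apply, Nem_apply, one_mul, co_add, co_smul, co_smul]
    have e : v x = u x + k x := by rw [hk, co_sub]; ring
    rw [e]
    refine (hq (u x) (k x) (coord_le u x) ((coord_le k x).trans hk1.le)).trans (le_abs_self _)
  rw [one_mul] at h1
  have h2 : ‖ε' • A + C • B‖ ≤ ε' * ‖u‖ + C * ‖k‖ := by
    refine (norm_add_le _ _).trans ?_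
    rw [norm_smul, norm_smul, Real.norm_eq_abs, Real.norm_eq_abs, abs_of_pos hε'0,
      abs_of_nonneg hC]
    gcongr
  have h3 : ε' * ‖u‖ ≤ ε / 2 := by
    rw [hε', div_mul_eq_mul_div, div_le_div_iff₀ (by positivity) (by norm_num)]
    nlinarith
  have h4 : C * ‖k‖ < ε / 2 := by
    rw [lt_div_iff₀ (by positivity)] at hk2
    have : C * ‖k‖ * 2 ≤ ‖k‖ * (2 * (C + 1)) := by nlinarith
    rcases hkn.eq_or_lt with h0 | h0
    · rw [← h0]; simpa using hε
    · nlinarith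
  linarith

theorem abs_inner_le (u k : H1 X) : Summable (fun x => |u x| * |k x|) ∧
    ∑' x, |u x| * |k x| ≤ ‖u‖ * ‖k‖ := by
  let A : H1 X := ⟨fun x => |u x|, memL2_of_le u 1 (by simp)⟩
  let B : H1 X := ⟨fun x => |k x|, memL2_of_le k 1 (by simp)⟩
  have hA : ‖A‖ ≤ ‖u‖ := by
    have := norm_le_of_coord u A 1 zero_le_one (by intro x; change |(|u x|)| ≤ _; simp)
    simpa using this
  have hB : ‖B‖ ≤ ‖k‖ := by
    have := norm_le_of_coord k B 1 zero_le_one (by intro x; change |(|k x|)| ≤ _; simp)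
    simpa using this
  have h := inner_hasSum A B
  have h' : HasSum (fun x => |u x| * |k x|) (inner ℝ A B) := h
  refine ⟨h'.summable, ?_⟩
  rw [h'.tsum_eq]
  refine (real_inner_le_norm A B).trans ?_
  gcongr

theorem Psi_deriv (h : NL f F) (u : H1 X) :
    HasFDerivAt (fun v : H1 X => ∑' x, F (v x)) (innerSL ℝ (Nem h u)) u := by
  rw [hasFDerivAt_iff_isLittleO_nhds_zero, Asymptotics.isLittleO_iff]
  intro ε hε
  have hu := norm_nonneg u
  set ε' := ε / (2 * (‖u‖ + 1)) with hε'
  have hε'0 : 0 < ε' := by positivity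
  obtain ⟨C, hC, hq⟩ := h.quasiF ‖u‖ ε' hε'0
  have hball : Metric.ball (0 : H1 X) (min 1 (ε / (2 * (C + 1)))) ∈ nhds (0 : H1 X) :=
    Metric.ball_mem_nhds _ (by positivity)
  filter_upwards [hball] with k hk
  rw [mem_ball_zero_iff] at hk
  have hk1 : ‖k‖ < 1 := hk.trans_le (min_le_left _ _)
  have hk2 : ‖k‖ < ε / (2 * (C + 1)) := hk.trans_le (min_le_right _ _)
  have hkn := norm_nonneg k
  have hs := ((F_summable h (u + k)).hasSum.sub (F_summable h u).hasSum).sub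
    (inner_hasSum (Nem h u) k)
  rw [innerSL_apply_apply]
  obtain ⟨ha, hb⟩ := abs_inner_le u k
  have hb1 : HasSum (fun x => ε' * (|u x| * |k x|) + C * k x ^ 2)
      (ε' * ∑' x, |u x| * |k x| + C * ‖k‖ ^ 2) :=
    (ha.hasSum.mul_left ε').add ((norm_hasSum k).mul_left C)
  have hpt : ∀ x, |F ((u + k) x) - F (u x) - Nem h u x * k x| ≤
      ε' * (|u x| * |k x|) + C * k x ^ 2 := by
    intro x
    rw [co_add, Nem_apply]
    exact hq (u x) (k x) (coord_le u x) ((coord_le k x).trans hk1.le)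
  have h1 : ‖(∑' x, F ((u + k) x)) - (∑' x, F (u x)) - inner ℝ (Nem h u) k‖ ≤
      ε' * ∑' x, |u x| * |k x| + C * ‖k‖ ^ 2 := by
    rw [Real.norm_eq_abs, abs_le]
    constructor
    · exact hasSum_le (fun x => (abs_le.1 (hpt x)).1) hb1.neg hs
    · exact hasSum_le (fun x => (abs_le.1 (hpt x)).2) hs hb1
  refine h1.trans ?_
  have h3 : ε' * ∑' x, |u x| * |k x| ≤ ε / 2 * ‖k‖ := by
    calc ε' * ∑' x, |u x| * |k x| ≤ ε' * (‖u‖ * ‖k‖) := by gcongr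
      _ = (ε' * ‖u‖) * ‖k‖ := by ring
      _ ≤ ε / 2 * ‖k‖ := by
        gcongr
        rw [hε', div_mul_eq_mul_div, div_le_div_iff₀ (by positivity) (by norm_num)]
        nlinarith
  have h4 : C * ‖k‖ ≤ ε / 2 := by
    rw [lt_div_iff₀ (by positivity)] at hk2
    nlinarith
  nlinarith


/-- abstract functional -/
def Phi (F : ℝ → ℝ) (L : H1 X →L[ℝ] H1 X) (u : H1 X) : ℝ :=
  1/2 * inner ℝ u (L u) - ∑' x, F (u x)

def II (h : NL f F) (L : H1 X →L[ℝ] H1 X) (u : H1 X) : ℝ :=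
  inner ℝ u (L u) - inner ℝ (Nem h u) u

/-- the functional on the Nehari set -/
def SS (f F : ℝ → ℝ) (u : H1 X) : ℝ := ∑' x, (1/2 * (f (u x) * u x) - F (u x))

theorem SS_hasSum (h : NL f F) (u : H1 X) :
    HasSum (fun x => 1/2 * (f (u x) * u x) - F (u x))
      (SS f F u) := by
  exact (((Nem_sum h u).summable.mul_left (1/2)).sub (F_summable h u)).hasSum

theorem SS_eq (h : NL f F) (u : H1 X) : SS f F u = 1/2 * inner ℝ (Nem h u) u - ∑' x, F (u x) :=
  (SS_hasSum h u).unique (((Nem_sum h u).mul_left (1/2)).sub (F_summable h u).hasSum)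

theorem SS_nonneg (h : NL f F) (u : H1 X) : 0 ≤ SS f F u := tsum_nonneg fun x => h.G_nonneg _

theorem Phi_eq_SS (h : NL f F) (L : H1 X →L[ℝ] H1 X) (u : H1 X) (hu : II h L u = 0) : Phi F L u = SS f F u := by
  rw [SS_eq h, Phi]
  unfold II at hu
  linarith

theorem Phi_deriv (h : NL f F) (L : H1 X →L[ℝ] H1 X) (hsym : ∀ u v, inner ℝ (L u) v = inner ℝ u (L v)) (u : H1 X) :
    HasFDerivAt (Phi F L) (innerSL ℝ (L u - Nem h u)) u := by
  have h1 : HasFDerivAt (fun u : H1 X => inner ℝ u (L u)) _ u :=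
    (hasFDerivAt_id u).inner ℝ (L.hasFDerivAt (x := u))
  have h2 := (h1.const_mul (1/2)).sub (Psi_deriv h u)
  refine h2.congr_fderiv ?_
  ext v
  simp only [id_eq, sub_apply, smul_apply,
    ContinuousLinearMap.comp_apply, ContinuousLinearMap.prod_apply, fderivInnerCLM_apply,
    innerSL_apply_apply, inner_sub_left, smul_eq_mul, ContinuousLinearMap.id_apply]
  rw [hsym, real_inner_comm (L u) v, hsym]
  ring

theorem II_cont (h : NL f F) (L : H1 X →L[ℝ] H1 X) : Continuous (II h L) := by
  unfold II
  exact (continuous_id.inner L.continuous).sub ((Nem_cont h).inner continuous_id)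

theorem Q_smul (L : H1 X →L[ℝ] H1 X) (s : ℝ) (u : H1 X) : inner ℝ (s • u) (L (s • u)) = s ^ 2 * inner ℝ u (L u) := by
  rw [map_smul, real_inner_smul_left, real_inner_smul_right]
  ring


theorem small_quad (h : NL f F) {V0 : ℝ} (hV0 : 0 < V0) : ∃ δ > 0, ∀ t : ℝ, |t| < δ → f t * t ≤ V0 / 2 * t ^ 2 := by
  obtain ⟨δ, hδ, hs⟩ := h.small (V0 / 2) (by positivity)
  refine ⟨δ, hδ, fun t ht => ?_⟩
  calc f t * t ≤ |f t * t| := le_abs_self _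
    _ = |f t| * |t| := abs_mul _ _
    _ ≤ V0 / 2 * |t| * |t| := by gcongr; exact hs t ht
    _ = V0 / 2 * t ^ 2 := by rw [mul_assoc, ← sq, sq_abs]

theorem small_pos (h : NL f F) {V0 : ℝ} (hV0 : 0 < V0) : ∃ δ > 0, ∀ L : H1 X →L[ℝ] H1 X, (∀ u, V0 * ‖u‖ ^ 2 ≤ inner ℝ u (L u)) →
    ∀ u : H1 X, u ≠ 0 → (∀ x, |u x| < δ) → 0 < II h L u := by
  obtain ⟨δ, hδ, hs⟩ := small_quad h hV0
  refine ⟨δ, hδ, fun L hlow u hu hx => ?_⟩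
  have h1 : inner ℝ (Nem h u) u ≤ V0 / 2 * ‖u‖ ^ 2 :=
    hasSum_le (fun x => hs _ (hx x)) (Nem_sum h u) ((norm_hasSum u).mul_left _)
  have h2 := hlow u
  have h3 : 0 < ‖u‖ := norm_pos_iff.2 hu
  have h4 : 0 < V0 * ‖u‖ ^ 2 := by positivity
  unfold II
  linarith

theorem ray_proj (h : NL f F) (L : H1 X →L[ℝ] H1 X) {V0 : ℝ} (hV0 : 0 < V0)
    (hlow : ∀ u, V0 * ‖u‖ ^ 2 ≤ inner ℝ u (L u)) (u : H1 X) (hu : u ≠ 0) (hI : II h L u ≤ 0) :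
    ∃ t : ℝ, t • u ≠ 0 ∧ II h L (t • u) = 0 ∧ SS f F (t • u) ≤ SS f F u := by
  obtain ⟨δ, hδ, hs⟩ := small_pos (X := X) h hV0
  have hn : 0 < ‖u‖ := norm_pos_iff.2 hu
  obtain ⟨t0, ht0, ht1⟩ : ∃ t, 0 < t ∧ t < min 1 (δ / ‖u‖) := exists_between (by positivity)
  have h0 : 0 < II h L (t0 • u) := by
    refine hs L hlow _ (smul_ne_zero ht0.ne' hu) fun x => ?_
    refine (coord_le _ x).trans_lt ?_
    rw [norm_smul, Real.norm_eq_abs, abs_of_pos ht0]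
    exact (lt_div_iff₀ hn).1 (ht1.trans_le (min_le_right _ _))
  have ht01 : t0 ≤ 1 := (ht1.trans_le (min_le_left _ _)).le
  have hc : ContinuousOn (fun t : ℝ => II h L (t • u)) (Set.Icc t0 1) :=
    ((II_cont h L).comp (continuous_id.smul continuous_const)).continuousOn
  obtain ⟨t, ht, hz⟩ := intermediate_value_Icc' ht01 hc
    (show (0:ℝ) ∈ Set.Icc _ _ from ⟨by simpa using hI, h0.le⟩)
  have htp : 0 < t := ht0.trans_le ht.1
  refine ⟨t, smul_ne_zero htp.ne' hu, hz, ?_⟩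
  refine hasSum_le (fun x => ?_) (SS_hasSum h (t • u)) (SS_hasSum h u)
  rw [co_smul]
  exact h.G_mono (u x) t htp.le ht.2

theorem ray_max (h : NL f F) (L : H1 X →L[ℝ] H1 X) (u : H1 X) (hI : II h L u = 0) (s : ℝ) (hs : 0 ≤ s) :
    Phi F L (s • u) ≤ Phi F L u := by
  unfold Phi
  rw [Q_smul]
  have e : inner ℝ u (L u) = inner ℝ (Nem h u) u := by unfold II at hI; linarith
  have h1 : (∑' x, F (u x)) - ∑' x, F ((s • u) x) ≤ (1 - s ^ 2) / 2 * inner ℝ (Nem h u) u :=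
    hasSum_le (fun x => h.key (u x) s hs)
      ((F_summable h u).hasSum.sub (F_summable h (s • u)).hasSum) ((Nem_sum h u).mul_left _)
  rw [e]
  linarith

theorem exists_coord_ne (u : H1 X) (hu : u ≠ 0) : ∃ x, u x ≠ 0 := by
  by_contra hc
  push Not at hc
  exact hu (lp.ext (funext hc))

theorem ray_lt (h : NL f F) (L : H1 X →L[ℝ] H1 X) (u : H1 X) (hu : u ≠ 0) (hI : II h L u = 0) (s : ℝ) (hs : 0 < s) (hs1 : s < 1) :
    0 < II h L (s • u) := by
  obtain ⟨x0, hx0⟩ := exists_coord_ne u hu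
  have e : inner ℝ u (L u) = inner ℝ (Nem h u) u := by unfold II at hI; linarith
  have hlt : ∀ x, u x ≠ 0 → f ((s • u) x) * (s • u) x < s ^ 2 * (f (u x) * u x) := by
    intro x hx
    rw [co_smul]
    have := h.ray (u x) s hx hs hs1
    nlinarith
  have := hasSum_lt (fun x => ?_) (hlt x0 hx0) (Nem_sum h (s • u)) ((Nem_sum h u).mul_left (s ^ 2))
  · unfold II
    rw [Q_smul, e]
    linarith
  · by_cases hx : u x = 0
    · simp [hx]
    · exact (hlt x hx).le

theorem ray_gt (h : NL f F) (L : H1 X →L[ℝ] H1 X) (u : H1 X) (hu : u ≠ 0) (hI : II h L u = 0) (s : ℝ) (hs1 : 1 < s) :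
    II h L (s • u) < 0 := by
  obtain ⟨x0, hx0⟩ := exists_coord_ne u hu
  have e : inner ℝ u (L u) = inner ℝ (Nem h u) u := by unfold II at hI; linarith
  have hlt : ∀ x, u x ≠ 0 → s ^ 2 * (f (u x) * u x) < f ((s • u) x) * (s • u) x := by
    intro x hx
    rw [co_smul]
    have := h.ray' (u x) s hx hs1
    nlinarith
  have := hasSum_lt (fun x => ?_) (hlt x0 hx0) ((Nem_sum h u).mul_left (s ^ 2)) (Nem_sum h (s • u))
  · unfold II
    rw [Q_smul, e]
    linarith
  · by_cases hx : u x = 0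
    · simp [hx]
    · exact (hlt x hx).le

theorem bound (h : NL f F) (L : H1 X →L[ℝ] H1 X) {V0 : ℝ} (hV0 : 0 < V0)
    (hlow : ∀ u, V0 * ‖u‖ ^ 2 ≤ inner ℝ u (L u)) (K : ℝ) (hK : 0 ≤ K) : ∃ R', ∀ u : H1 X, u ≠ 0 → II h L u = 0 → Phi F L u ≤ K →
    ‖u‖ ≤ R' := by
  obtain ⟨δ, hδ, hsm⟩ := small_quad h hV0
  set s := 2 * K + 2 with hs
  have hs0 : 0 < s := by positivity
  obtain ⟨R, hR, hsup⟩ := h.super ((s / δ) ^ 2)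
  refine ⟨Real.sqrt ((s * R / δ) ^ 2 / V0), fun u hu hI hP => ?_⟩
  have hn : 0 < ‖u‖ := norm_pos_iff.2 hu
  set Q := inner ℝ u (L u) with hQ
  have hQl := hlow u
  rw [← hQ] at hQl
  have hQ0 : 0 < Q := lt_of_lt_of_le (by positivity) hQl
  set σ := Real.sqrt Q with hσ
  have hσ0 : 0 < σ := Real.sqrt_pos.2 hQ0
  have hσ2 : σ ^ 2 = Q := Real.sq_sqrt hQ0.le
  obtain ⟨x, hx⟩ : ∃ x, δ ≤ |((s / σ) • u) x| := by
    by_contra hc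
    push Not at hc
    have h1 := ray_max h L u hI (s / σ) (by positivity)
    have h2 : ∑' x, F (((s / σ) • u) x) ≤ V0 / 4 * ‖(s / σ) • u‖ ^ 2 := by
      refine hasSum_le (fun x => ?_) (F_summable h _).hasSum ((norm_hasSum _).mul_left (V0 / 4))
      have h3 := F_le h (((s / σ) • u) x)
      have h4 := hsm _ (hc x)
      linarith
    have h3 := hlow ((s / σ) • u)
    unfold Phi at h1
    have h5 : inner ℝ ((s / σ) • u) (L ((s / σ) • u)) = s ^ 2 := by
      rw [Q_smul, ← hQ, ← hσ2]
      field_simp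
    rw [h5] at h1 h3
    unfold Phi at hP
    nlinarith
  rw [co_smul, abs_mul, abs_of_pos (div_pos hs0 hσ0), div_mul_eq_mul_div, le_div_iff₀ hσ0] at hx
  have hx' : σ ≤ s / δ * |u x| := by
    rw [div_mul_eq_mul_div, le_div_iff₀ hδ]
    linarith
  have hx0 : 0 < |u x| := by
    by_contra hc
    have : |u x| = 0 := le_antisymm (not_lt.1 hc) (abs_nonneg _)
    rw [this] at hx'
    linarith
  have hQx : Q ≤ (s / δ) ^ 2 * u x ^ 2 := by
    rw [← hσ2, ← sq_abs (u x), ← mul_pow]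
    gcongr
  have hPhi : 0 ≤ Phi F L u := by
    rw [Phi_eq_SS h L u hI]
    exact SS_nonneg h u
  have hFx : F (u x) ≤ ∑' x, F (u x) :=
    (F_summable h u).le_tsum x fun y _ => h.F_nonneg _
  have hFQ : F (u x) ≤ 1/2 * Q := by
    unfold Phi at hPhi
    linarith
  have hxR : |u x| < R := by
    by_contra hc
    push Not at hc
    have h1 := hsup _ hc
    linarith
  have hfin : Q ≤ (s * R / δ) ^ 2 := by
    refine hQx.trans ?_
    rw [← sq_abs (u x), ← mul_pow]
    have : s / δ * |u x| ≤ s * R / δ := by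
      rw [div_mul_eq_mul_div]
      gcongr
    gcongr
  apply Real.le_sqrt_of_sq_le
  rw [le_div_iff₀ hV0]
  linarith

theorem critical (h : NL f F) (L : H1 X →L[ℝ] H1 X) (hsym : ∀ u v, inner ℝ (L u) v = inner ℝ u (L v))
    (u : H1 X) (hu : u ≠ 0) (hI : II h L u = 0)
    (hmin : ∀ w, w ≠ 0 → II h L w = 0 → Phi F L u ≤ Phi F L w) : L u - Nem h u = 0 := by
  by_contra hg
  set v := -(L u - Nem h u) with hv
  have hgc : Continuous fun w : H1 X => inner ℝ (L w - Nem h w) v :=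
    (L.continuous.sub (Nem_cont h)).inner continuous_const
  have hneg : inner ℝ (L u - Nem h u) v < 0 := by
    rw [hv, inner_neg_right, real_inner_self_eq_norm_sq]
    have : 0 < ‖L u - Nem h u‖ := norm_pos_iff.2 hg
    have : 0 < ‖L u - Nem h u‖ ^ 2 := by positivity
    linarith
  -- a neighbourhood in `(t, r)` of `(1, 0)` where the derivative in direction `v` is negative
  have hmap : Continuous fun p : ℝ × ℝ => p.1 • (u + p.2 • v) := by fun_prop
  have hev : ∀ᶠ p : ℝ × ℝ in nhds (1, 0),
      inner ℝ (L (p.1 • (u + p.2 • v)) - Nem h (p.1 • (u + p.2 • v))) v < 0 := by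
    have := (hgc.comp hmap).continuousAt (x := (1, 0))
    exact this.eventually_lt continuousAt_const (by simpa using hneg)
  obtain ⟨η, hη, hball⟩ := Metric.eventually_nhds_iff.1 hev
  set ε := min (1/2) (η / 2) with hε
  have hε0 : 0 < ε := by positivity
  have hε1 : ε ≤ 1/2 := min_le_left _ _
  have hε2 : ε < η := lt_of_le_of_lt (min_le_right _ _) (by linarith)
  have ha := ray_lt h L u hu hI (1 - ε) (by linarith) (by linarith)
  have hb := ray_gt h L u hu hI (1 + ε) (by linarith)
  have hca : ∀ c : ℝ, ContinuousAt (fun r : ℝ => II h L (c • (u + r • v))) 0 := by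
    intro c
    have : Continuous fun r : ℝ => c • (u + r • v) := by fun_prop
    exact ((II_cont h L).comp this).continuousAt
  have ea : ∀ᶠ r : ℝ in nhds 0, 0 < II h L ((1 - ε) • (u + r • v)) :=
    continuousAt_const.eventually_lt (hca _) (by simpa using ha)
  have eb : ∀ᶠ r : ℝ in nhds 0, II h L ((1 + ε) • (u + r • v)) < 0 :=
    (hca _).eventually_lt continuousAt_const (by simpa using hb)
  have hne : ∀ᶠ r : ℝ in nhds 0, u + r • v ≠ 0 := by
    have : Continuous fun r : ℝ => u + r • v := by fun_prop
    exact this.continuousAt.eventually_ne (by simpa using hu)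
  obtain ⟨ρ, hρ, hr⟩ := Metric.eventually_nhds_iff.1 ((ea.and eb).and hne)
  obtain ⟨r, hr0, hr1⟩ : ∃ r, 0 < r ∧ r < min ρ η := exists_between (by positivity)
  have hrη : r < η := hr1.trans_le (min_le_right _ _)
  obtain ⟨⟨ha', hb'⟩, hne'⟩ := hr (y := r) (by
    rw [Real.dist_eq, sub_zero, abs_of_pos hr0]
    exact hr1.trans_le (min_le_left _ _))
  have hc : ContinuousOn (fun t : ℝ => II h L (t • (u + r • v))) (Set.Icc (1 - ε) (1 + ε)) :=
    ((II_cont h L).comp (continuous_id.smul continuous_const)).continuousOn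
  obtain ⟨t, ht, hz⟩ := intermediate_value_Icc' (by linarith) hc
    (show (0:ℝ) ∈ Set.Icc _ _ from ⟨hb'.le, ha'.le⟩)
  have ht0 : 0 < t := by linarith [ht.1]
  have hle := hmin (t • (u + r • v)) (smul_ne_zero ht0.ne' hne') hz
  have hle2 := ray_max h L u hI t ht0.le
  -- strict decrease
  have hd : ∀ x : ℝ, HasDerivAt (fun x : ℝ => Phi F L (t • (u + x • v)))
      (t * inner ℝ (L (t • (u + x • v)) - Nem h (t • (u + x • v))) v) x := by
    intro x
    have h1 : HasDerivAt (fun x : ℝ => t • (u + x • v)) (t • v) x := by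
      have := (((hasDerivAt_id x).smul_const v).const_add u).const_smul t
      rw [one_smul] at this
      exact this
    have h2 := (Phi_deriv h L hsym (t • (u + x • v))).comp_hasDerivAt x h1
    refine h2.congr_deriv ?_
    rw [innerSL_apply_apply, real_inner_smul_right]
  have hanti := strictAntiOn_of_deriv_neg (convex_Icc 0 r)
    (f := fun x : ℝ => Phi F L (t • (u + x • v)))
    (fun x _ => (hd x).continuousAt.continuousWithinAt) (by
      intro x hx
      rw [interior_Icc] at hx
      rw [(hd x).deriv]
      refine mul_neg_of_pos_of_neg ht0 ?_
      refine hball (y := (t, x)) ?_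
      rw [Prod.dist_eq, Real.dist_eq, Real.dist_eq]
      refine max_lt ?_ ?_
      · refine lt_of_le_of_lt (abs_le.2 ⟨?_, ?_⟩) hε2
        · linarith [ht.1]
        · linarith [ht.2]
      · simp only [sub_zero]
        rw [abs_of_pos hx.1]
        linarith [hx.2])
  have := hanti ⟨le_rfl, hr0.le⟩ ⟨hr0.le, le_rfl⟩ hr0
  simp only [zero_smul, add_zero] at this
  linarith

end Func

/-! ### Concentration and existence -/

noncomputable section Conc

open Filter Topology

variable {X : Type*} [AddCommGroup X] {f F : ℝ → ℝ}

theorem split_sum [DecidableEq X] (H : ℝ → ℝ) (H0 : H 0 = 0) (A : Finset X) (v : H1 X) (S : ℝ)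
    (hS : HasSum (fun x => H (v x)) S) :
    HasSum (fun x => H ((v - cut A v) x)) (S - ∑ x ∈ A, H (v x)) := by
  have h1 := hasSum_sum_of_ne_finset_zero (L := .unconditional X)
    (f := fun x => if x ∈ A then H (v x) else 0) (s := A) (by
      intro x hx
      simp [hx])
  have e : ∑ x ∈ A, (if x ∈ A then H (v x) else 0) = ∑ x ∈ A, H (v x) :=
    Finset.sum_congr rfl fun x hx => by simp [hx]
  rw [e] at h1
  have h2 := hS.sub h1
  have e2 : (fun x => H ((v - cut A v) x)) =
      fun x => H (v x) - (if x ∈ A then H (v x) else 0) := by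
    funext x
    rw [co_sub, cut_apply]
    by_cases hx : x ∈ A <;> simp [hx, H0]
  rw [e2]
  exact h2

theorem conc (D : Finset X) (h : NL f F) (v : ℕ → H1 X) (v' : H1 X)
    (V : ℕ → X → ℝ) (W : X → ℝ) (hV : ∀ n, BV (V n)) (hW : BV W)
    (hv : ∀ x, Tendsto (fun n => v n x) atTop (𝓝 (v' x)))
    (hVW : ∀ x, Tendsto (fun n => V n x) atTop (𝓝 (W x)))
    (hI : ∀ n, II h (Lop D (V n) (hV n)) (v n) = 0) (c : ℝ)
    (hc : Tendsto (fun n => SS f F (v n)) atTop (𝓝 c))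
    (hmin : ∀ n w, w ≠ 0 → II h (Lop D (V n) (hV n)) w ≤ 0 → c ≤ SS f F w) (hv0 : v' ≠ 0) :
    II h (Lop D W hW) v' ≤ 0 ∧ SS f F v' ≤ c := by
  classical
  have hFc : Continuous F := continuous_iff_continuousAt.2 fun t => (h.dF t).continuousAt
  set G : ℝ → ℝ := fun t => 1/2 * (f t * t) - F t with hG
  have hGc : Continuous G :=
    (continuous_const.mul (h.cont.mul continuous_id)).sub hFc
  have hGs : ∀ A : Finset X, Tendsto (fun n => ∑ x ∈ A, G (v n x)) atTop
      (𝓝 (∑ x ∈ A, G (v' x))) := fun A =>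
    tendsto_finsetSum _ fun x _ => (hGc.tendsto _).comp (hv x)
  refine ⟨?_, ?_⟩
  · by_contra hcon
    push Not at hcon
    obtain ⟨x0, hx0⟩ := exists_coord_ne v' hv0
    -- choose the cut-off
    have hlim : Tendsto (fun A : Finset X => inner ℝ (cut A v') (Lop D W hW ((2:ℝ) • v' - cut A v'))
        - ∑ x ∈ A, f (v' x) * v' x) atTop (𝓝 (II h (Lop D W hW) v')) := by
      have h1 := cut_tendsto v'
      have h2 : Tendsto (fun A : Finset X => (2:ℝ) • v' - cut A v') atTop (𝓝 v') := by
        have := (tendsto_const_nhds (x := (2:ℝ) • v')).sub h1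
        have e : (2:ℝ) • v' - v' = v' := by rw [two_smul]; abel
        rwa [e] at this
      exact (h1.inner (((Lop D W hW).continuous.tendsto _).comp h2)).sub (Nem_sum h v')
    obtain ⟨A, hA, hA0⟩ := ((hlim.eventually (eventually_gt_nhds hcon)).and
      (eventually_ge_atTop ({x0} : Finset X))).exists
    have hx0A : x0 ∈ A := hA0 (by simp)
    have hcut : ∀ x, Tendsto (fun n => ((2:ℝ) • v n - cut A (v n)) x) atTop
        (𝓝 (((2:ℝ) • v' - cut A v') x)) := by
      intro x
      simp only [co_sub, co_smul, cut_apply]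
      refine ((hv x).const_mul 2).sub ?_
      split_ifs
      · exact hv x
      · exact tendsto_const_nhds
    have hlimn := (cut_inner_tendsto D A v (fun n => (2:ℝ) • v n - cut A (v n)) v' _ V W hV hW hv
      hcut hVW).sub (tendsto_finsetSum A fun x _ =>
        ((h.cont.tendsto _).comp (hv x)).mul (hv x))
    have hev := hlimn.eventually (eventually_gt_nhds hA)
    have hkey : ∀ᶠ n in atTop, c ≤ SS f F (v n) - ∑ x ∈ A, G (v n x) := by
      filter_upwards [hev] with n hn
      set w := v n - cut A (v n) with hw
      have e1 : inner ℝ w (Lop D (V n) (hV n) w) = inner ℝ (v n) (Lop D (V n) (hV n) (v n)) -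
          inner ℝ (cut A (v n)) (Lop D (V n) (hV n) ((2:ℝ) • v n - cut A (v n))) := by
        have := Lop_symm D (V n) (hV n) (v n) (cut A (v n))
        rw [real_inner_comm] at this
        simp only [hw, map_sub, map_smul, inner_sub_left, inner_sub_right, real_inner_smul_right]
        linarith
      have e2 : inner ℝ (Nem h w) w = inner ℝ (Nem h (v n)) (v n) - ∑ x ∈ A, f (v n x) * v n x :=
        (Nem_sum h w).unique
          (split_sum (fun t => f t * t) (by simp) A (v n) _ (Nem_sum h (v n)))
      have e3 : II h (Lop D (V n) (hV n)) w < 0 := by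
        have := hI n
        unfold II at this ⊢
        rw [e1, e2]
        simp only [Function.comp] at hn
        linarith
      have hw0 : w ≠ 0 := by
        intro h0
        rw [h0] at e3
        simp [II] at e3
      have e4 : SS f F w = SS f F (v n) - ∑ x ∈ A, G (v n x) :=
        (SS_hasSum h w).unique (split_sum G (by simp [hG, h.F0]) A (v n) _ (SS_hasSum h (v n)))
      rw [← e4]
      exact hmin n w hw0 e3.le
    have hfin := ge_of_tendsto (hc.sub (hGs A)) hkey
    have hpos : 0 < ∑ x ∈ A, G (v' x) :=
      Finset.sum_pos' (fun x _ => h.G_nonneg _) ⟨x0, hx0A, h.G_pos hx0⟩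
    linarith
  · refine hasSum_le_of_sum_le (SS_hasSum h v') fun A => ?_
    refine le_of_tendsto_of_tendsto' (hGs A) hc fun n => ?_
    exact sum_le_hasSum A (fun x _ => h.G_nonneg _) (SS_hasSum h (v n))

theorem SS_shift (h : NL f F) (z : X) (u : H1 X) : SS f F (shiftOp z u) = SS f F u :=
  (SS_hasSum h _).unique ((Equiv.hasSum_iff (f := fun x => 1/2 * (f (u x) * u x) - F (u x))
    (Equiv.addRight z)).2 (SS_hasSum h u))

theorem BV_shift {V : X → ℝ} (hV : BV V) (z : X) : BV (fun x => V (x + z)) := by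
  obtain ⟨C, hC, hb⟩ := hV
  exact ⟨C, hC, fun x => hb _⟩

theorem II_shift (D : Finset X) (h : NL f F) (V : X → ℝ) (hV : BV V) (z : X) (u : H1 X)
    (hV' : BV (fun x => V (x + z))) :
    II h (Lop D (fun x => V (x + z)) hV') (shiftOp z u) = II h (Lop D V hV) u := by
  unfold II
  rw [Lop_shift D V hV z, shift_inner]
  have : Nem h (shiftOp z u) = shiftOp z (Nem h u) := rfl
  rw [this, shift_inner]

theorem extract [Countable X] (D : Finset X) (h : NL f F) (V : X → ℝ) (hV : BV V)
    (W : X → ℝ) (hW : BV W) (u : ℕ → H1 X) (z : ℕ → X) (R δ c : ℝ) (hδ : 0 < δ)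
    (hR : ∀ n, ‖u n‖ ≤ R) (hz : ∀ n, δ ≤ |u n (z n)|)
    (hVW : ∀ x, Tendsto (fun n => V (x + z n)) atTop (𝓝 (W x)))
    (hI : ∀ n, II h (Lop D V hV) (u n) = 0)
    (hc : Tendsto (fun n => SS f F (u n)) atTop (𝓝 c))
    (hmin : ∀ w, w ≠ 0 → II h (Lop D V hV) w ≤ 0 → c ≤ SS f F w) :
    ∃ v' : H1 X, v' ≠ 0 ∧ II h (Lop D W hW) v' ≤ 0 ∧ SS f F v' ≤ c := by
  set v : ℕ → H1 X := fun n => shiftOp (z n) (u n) with hv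
  have hcomp : IsCompact (Set.univ.pi fun _ : X => Set.Icc (-R) R) :=
    isCompact_univ_pi fun _ => isCompact_Icc
  have hvR : ∀ n, ‖v n‖ ≤ R := fun n => by rw [hv, shift_norm]; exact hR n
  obtain ⟨g, -, φ, hφ, hlim⟩ := hcomp.tendsto_subseq (x := fun n x => v n x) (by
    intro n x _
    exact abs_le.1 ((coord_le (v n) x).trans (hvR n)))
  have hmem : Memℓp g 2 := by
    refine lp.memℓp_of_tendsto (F := fun n => v (φ n)) (l := atTop) ?_ hlim
    rw [isBounded_iff_forall_norm_le]
    refine ⟨R, ?_⟩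
    rintro _ ⟨n, rfl⟩
    exact hvR _
  set v' : H1 X := ⟨g, hmem⟩ with hv'
  have hpt : ∀ x, Tendsto (fun n => v (φ n) x) atTop (𝓝 (v' x)) := fun x =>
    (tendsto_pi_nhds.1 hlim) x
  have hne : v' ≠ 0 := by
    intro h0
    have h1 := (hpt 0).abs
    have h2 : δ ≤ |v' 0| := ge_of_tendsto' h1 fun n => by
      change δ ≤ |u (φ n) (0 + z (φ n))|
      rw [zero_add]
      exact hz _
    rw [h0, co_zero, abs_zero] at h2
    linarith
  refine ⟨v', hne, ?_⟩
  refine conc D h (fun n => v (φ n)) v' (fun n x => V (x + z (φ n))) W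
    (fun n => BV_shift hV _) hW hpt (fun x => (hVW x).comp hφ.tendsto_atTop) ?_ c ?_ ?_ hne
  · intro n
    rw [hv, II_shift D h V hV]
    exact hI _
  · simp only [hv, SS_shift h]
    exact hc.comp hφ.tendsto_atTop
  · intro n w hw hIw
    have e : shiftOp (z (φ n)) (shiftOp (-z (φ n)) w) = w := shift_neg _ _
    have e2 := hIw
    rw [← e, II_shift D h V hV] at e2
    rw [← SS_shift h (-z (φ n)) w]
    refine hmin _ ?_ e2
    intro h0
    rw [h0, map_zero] at e
    exact hw e.symm

theorem nonempty_nehari (h : NL f F) (L : H1 X →L[ℝ] H1 X) {V0 : ℝ} (hV0 : 0 < V0)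
    (hlow : ∀ u, V0 * ‖u‖ ^ 2 ≤ inner ℝ u (L u)) : ∃ u : H1 X, u ≠ 0 ∧ II h L u = 0 := by
  classical
  set e : H1 X := lp.single 2 0 (1:ℝ) with he
  have he0 : e 0 = 1 := by rw [he]; exact lp.single_apply_self _ _ _
  set Q := inner ℝ e (L e) with hQ
  have hQ0 : 0 ≤ Q := le_trans (by positivity) (hlow e)
  obtain ⟨T, hT, hsup⟩ := h.super Q
  have h1 := hsup T (le_abs_self T)
  have hne : T • e ≠ 0 := by
    intro h0
    have : (T • e) 0 = 0 := by rw [h0]; rfl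
    rw [co_smul, he0] at this
    linarith
  have hI : II h L (T • e) ≤ 0 := by
    unfold II
    rw [Q_smul, ← hQ]
    have h2 : f ((T • e) 0) * (T • e) 0 ≤ inner ℝ (Nem h (T • e)) (T • e) :=
      le_hasSum (Nem_sum h (T • e)) 0 fun x _ => h.mul_nonneg' _
    rw [co_smul, he0, mul_one] at h2
    have h3 := F_le h T
    nlinarith [mul_nonneg hQ0 (sq_nonneg T)]
  obtain ⟨t, ht, hz, -⟩ := ray_proj h L hV0 hlow _ hne hI
  exact ⟨_, ht, hz⟩

theorem ground [Countable X] (D : Finset X) (h : NL f F) (V : X → ℝ) (hV : BV V)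
    {V0 Vinf : ℝ} (hV0 : 0 < V0)
    (hlow : ∀ u, V0 * ‖u‖ ^ 2 ≤ inner ℝ u (Lop D V hV u))
    (hVle : ∀ x, V x ≤ Vinf) (hlim : Tendsto V cofinite (𝓝 Vinf)) :
    ∃ u : H1 X, u ≠ 0 ∧ II h (Lop D V hV) u = 0 ∧
      Phi F (Lop D V hV) u =
        sInf (Phi F (Lop D V hV) '' {u | u ≠ 0 ∧ II h (Lop D V hV) u = 0}) := by
  set L := Lop D V hV with hL
  set Neh : Set (H1 X) := {u | u ≠ 0 ∧ II h L u = 0} with hNeh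
  set c := sInf (Phi F L '' Neh) with hc
  have hbdd : BddBelow (Phi F L '' Neh) := by
    refine ⟨0, ?_⟩
    rintro _ ⟨u, hu, rfl⟩
    rw [Phi_eq_SS h L u hu.2]
    exact SS_nonneg h u
  have hne : (Phi F L '' Neh).Nonempty := by
    obtain ⟨u, hu⟩ := nonempty_nehari h L hV0 hlow
    exact ⟨_, u, hu, rfl⟩
  have hcle : ∀ u, u ∈ Neh → c ≤ Phi F L u := fun u hu => csInf_le hbdd ⟨u, hu, rfl⟩
  obtain ⟨s, -, hs, hsm⟩ := exists_seq_tendsto_sInf hne hbdd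
  choose u huN hus using hsm
  have hSS : ∀ n, SS f F (u n) = s n := fun n => by
    rw [← hus n, Phi_eq_SS h L _ (huN n).2]
  have hSc : Tendsto (fun n => SS f F (u n)) atTop (𝓝 c) := by
    simp only [hSS]
    exact hs
  obtain ⟨K, hK⟩ := hs.bddAbove_range
  obtain ⟨R, hR⟩ := bound h L hV0 hlow |K| (abs_nonneg K)
  have hR' : ∀ n, ‖u n‖ ≤ R := fun n => hR _ (huN n).1 (huN n).2 (by
    rw [hus n]
    exact (hK ⟨n, rfl⟩).trans (le_abs_self K))
  obtain ⟨δ, hδ, hsp⟩ := small_pos (X := X) h hV0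
  have hz : ∀ n, ∃ x, δ ≤ |u n x| := by
    intro n
    by_contra hcon
    push Not at hcon
    have := hsp L hlow (u n) (huN n).1 hcon
    rw [(huN n).2] at this
    exact lt_irrefl _ this
  choose z hz using hz
  have hmin : ∀ w, w ≠ 0 → II h L w ≤ 0 → c ≤ SS f F w := by
    intro w hw hIw
    obtain ⟨t, ht, hzt, hle⟩ := ray_proj h L hV0 hlow w hw hIw
    have := hcle _ ⟨ht, hzt⟩
    rw [Phi_eq_SS h L _ hzt] at this
    exact this.trans hle
  have hw : ∃ w : H1 X, w ≠ 0 ∧ II h L w ≤ 0 ∧ SS f F w ≤ c := by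
    by_cases hfreq : ∃ x0, ∃ᶠ n in atTop, z n = x0
    · obtain ⟨x0, hx0⟩ := hfreq
      obtain ⟨φ, hφ, hφz⟩ := extraction_of_frequently_atTop hx0
      obtain ⟨v', hv', hI', hS'⟩ := extract D h V hV (fun x => V (x + x0)) (BV_shift hV x0)
        (fun n => u (φ n)) (fun n => z (φ n)) R δ c hδ (fun n => hR' _) (fun n => hz _)
        (fun x => by simp only [hφz]; exact tendsto_const_nhds) (fun n => (huN _).2)
        (hSc.comp hφ.tendsto_atTop) hmin
      have e : shiftOp x0 (shiftOp (-x0) v') = v' := shift_neg _ _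
      refine ⟨shiftOp (-x0) v', ?_, ?_, ?_⟩
      · intro h0
        rw [h0, map_zero] at e
        exact hv' e.symm
      · rw [← e, II_shift D h V hV] at hI'
        exact hI'
      · rw [SS_shift h]
        exact hS'
    · push Not at hfreq
      have hzt : Tendsto z atTop cofinite := by
        exact Filter.le_cofinite_iff_eventually_ne.2 (fun x => hfreq x)
      have hWb : BV (fun _ : X => Vinf) := ⟨|Vinf|, abs_nonneg _, fun _ => le_rfl⟩
      obtain ⟨v', hv', hI', hS'⟩ := extract D h V hV (fun _ => Vinf) hWb
        u z R δ c hδ hR' hz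
        (fun x => by
          have : Tendsto (fun n => x + z n) atTop cofinite :=
            (add_right_injective x).tendsto_cofinite.comp hzt
          exact hlim.comp this) (fun n => (huN _).2) hSc hmin
      refine ⟨v', hv', ?_, hS'⟩
      have := Lop_mono D V (fun _ => Vinf) hV hWb hVle v'
      unfold II at hI' ⊢
      linarith
  obtain ⟨w, hw0, hwI, hwS⟩ := hw
  obtain ⟨t, ht, hzt, hle⟩ := ray_proj h L hV0 hlow w hw0 hwI
  refine ⟨t • w, ht, hzt, le_antisymm ?_ (hcle _ ⟨ht, hzt⟩)⟩
  rw [Phi_eq_SS h L _ hzt]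
  exact hle.trans hwS

end Conc

theorem adjZ_finite (N : ℕ) : {d : Fin N → ℤ | ∑ i, (d i).natAbs = 1}.Finite := by
  refine (Set.finite_Icc (fun _ : Fin N => (-1:ℤ)) (fun _ => 1)).subset ?_
  intro d hd
  have h1 : ∀ i, (d i).natAbs ≤ 1 := fun i => by
    rw [Set.mem_setOf_eq] at hd
    rw [← hd]
    exact Finset.single_le_sum (f := fun i => (d i).natAbs) (fun _ _ => Nat.zero_le _)
      (Finset.mem_univ i)
  exact ⟨fun i => by have := h1 i; change -1 ≤ d i; omega,
    fun i => by have := h1 i; change d i ≤ 1; omega⟩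

/-- Theorem 1.2: existence of a ground state for `−Δu + V(x)u = f(u)` on `ℤ^N`
with a bounded potential well `V`. -/
theorem stmt1 (N : ℕ) (hN : 1 ≤ N)
    (f : ℝ → ℝ) (hcont : Continuous f)
    (a q : ℝ) (ha : 0 < a) (hq : 2 < q)
    (hgrowth : ∀ t, |f t| ≤ a * (|t| + |t| ^ (q - 1)))
    (hsmall : ∀ ε > 0, ∃ δ > 0, ∀ t : ℝ, t ≠ 0 → |t| < δ → |f t| ≤ ε * |t|)
    (hmono : StrictMonoOn (fun t => f t / |t|) (Set.Iio 0) ∧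
             StrictMonoOn (fun t => f t / |t|) (Set.Ioi 0))
    (F : ℝ → ℝ) (hF : ∀ t, F t = ∫ s in (0:ℝ)..t, f s)
    (hsuper : ∀ M : ℝ, ∃ R > 0, ∀ t : ℝ, R ≤ |t| → M ≤ F t / t ^ 2)
    (Vp : (Fin N → ℤ) → ℝ) (V0 Vinf : ℝ) (hV0 : 0 < V0)
    (hVlb : ∀ x, V0 ≤ Vp x)
    (hVlub : IsLUB (Set.range Vp) Vinf)
    (hVlim : Filter.Tendsto Vp Filter.cofinite (nhds Vinf)) :
    ∃ u : H1 (Fin N → ℤ), u ≠ 0 ∧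
      fderiv ℝ (PhiF (adjZ N) Vp (fun _ => F)) u = 0 ∧
      PhiF (adjZ N) Vp (fun _ => F) u =
        sInf (PhiF (adjZ N) Vp (fun _ => F) '' Nehari (adjZ N) Vp (fun _ => F)) := by

  have h := NL.mk' f hcont a q hq hgrowth hsmall hmono F hF hsuper
  have hVle : ∀ x, Vp x ≤ Vinf := fun x => hVlub.1 ⟨x, rfl⟩
  have hBV : BV Vp := ⟨Vinf, hV0.le.trans ((hVlb 0).trans (hVle 0)), fun x =>
    abs_le.2 ⟨by linarith [hVlb x, hVle x], hVle x⟩⟩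
  set D := (adjZ_finite N).toFinset with hD
  have hadj : ∀ x y, adjZ N x y ↔ y - x ∈ D := by
    intro x y
    rw [hD, Set.Finite.mem_toFinset, Set.mem_setOf_eq, adjZ]
    have : ∀ i, (x i - y i).natAbs = ((y - x) i).natAbs := fun i => by
      rw [Pi.sub_apply]; omega
    simp only [this]
  have hPhi : PhiF (adjZ N) Vp (fun _ => F) = Phi F (Lop D Vp hBV) := by
    funext u
    unfold PhiF Phi
    rw [(energy D (adjZ N) hadj Vp hBV u).tsum_eq]
  have hder : ∀ u, fderiv ℝ (Phi F (Lop D Vp hBV)) u = innerSL ℝ (Lop D Vp hBV u - Nem h u) :=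
    fun u => (Phi_deriv h _ (Lop_symm D Vp hBV) u).fderiv
  have hNeh : Nehari (adjZ N) Vp (fun _ => F) = {u | u ≠ 0 ∧ II h (Lop D Vp hBV) u = 0} := by
    ext u
    unfold Nehari
    rw [Set.mem_setOf_eq, Set.mem_setOf_eq, hPhi, hder, innerSL_apply_apply, inner_sub_left,
      Lop_symm, II]
  obtain ⟨u, hu0, hI, hmin⟩ := ground D h Vp hBV hV0
    (Lop_lower D (adjZ N) hadj Vp hBV V0 hVlb) hVle hVlim
  rw [hNeh, hPhi]
  refine ⟨u, hu0, ?_, hmin⟩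
  rw [hder, critical h (Lop D Vp hBV) (Lop_symm D Vp hBV) u hu0 hI, map_zero]
  intro w hw hIw
  rw [hmin]
  refine csInf_le ⟨0, ?_⟩ ⟨w, ⟨hw, hIw⟩, rfl⟩
  rintro _ ⟨v, hv, rfl⟩
  rw [Phi_eq_SS h _ v hv.2]
  exact SS_nonneg h v
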